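/- Let 𝔤 = 𝔤₁ ⊕ ⋯ ⊕ 𝔤_r be a finite-dimensional real Lie algebra that is the direct sum of ideals 𝔤₁, …, 𝔤_r, each of which is a simple Lie algebra with negative-definite Killing form. Let Γ be a group acting on 𝔤 by Lie algebra automorphisms, and suppose the action permutes the simple ideals: for every γ ∈ Γ and every i there is an index σ_γ(i) with γ(𝔤ᵢ) = 𝔤_{σ_γ(i)}. Then the real vector space of symmetric bilinear forms on 𝔤 that are both invariant and Γ-invariant (B(γx, γy) = B(x,y) for all γ ∈ Γ) has dimension equal to the number of orbits of the induced action of Γ on the set {𝔤₁, …, 𝔤_r} of simple ideals. -/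

import Mathlib

/-!
An invariant form pairs distinct simple ideals to zero, because simple Lie algebras are perfect.
On a simple ideal `𝔤ᵢ`, diagonalising an invariant symmetric form `B` against the definite form
`κ` gives an eigenvalue `cᵢ`, and the radical of `B - cᵢ κ` is then a nonzero ideal of `𝔤ᵢ`, hence
everything. So `B = ∑ cᵢ κ|𝔤ᵢ` with unique coefficients, and since automorphisms preserve `κ`, the
form `B` is `Γ`-invariant exactly when `c` is constant along the moves `𝔤ᵢ ↦ γ 𝔤ᵢ`.
-/

/-- The space of bilinear forms on a real Lie algebra `L` which are invariant, symmetric,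
and invariant under a family `ρ` of Lie algebra automorphisms of `L`. -/
noncomputable def invSymmEquivForms (L : Type*) [LieRing L] [LieAlgebra ℝ L]
    {Γ : Type*} (ρ : Γ → (L ≃ₗ⁅ℝ⁆ L)) :
    Submodule ℝ (L →ₗ[ℝ] L →ₗ[ℝ] ℝ) where
  carrier := {B | (∀ x y z : L, B ⁅x, y⁆ z = B x ⁅y, z⁆) ∧ (∀ x y : L, B x y = B y x) ∧
    ∀ γ : Γ, ∀ x y : L, B (ρ γ x) (ρ γ y) = B x y}
  add_mem' := by
    rintro B C ⟨hB1, hB2, hB3⟩ ⟨hC1, hC2, hC3⟩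
    exact ⟨fun x y z => by simp [hB1 x y z, hC1 x y z],
      fun x y => by simp [hB2 x y, hC2 x y],
      fun γ x y => by simp [hB3 γ x y, hC3 γ x y]⟩
  zero_mem' := ⟨fun _ _ _ => by simp, fun _ _ => by simp, fun _ _ _ => by simp⟩
  smul_mem' := by
    rintro c B ⟨h1, h2, h3⟩
    exact ⟨fun x y z => by simp [h1 x y z], fun x y => by simp [h2 x y],
      fun γ x y => by simp [h3 γ x y]⟩

section OrbitRelation

lemma natCard_quot_eq_natCard_range {α : Type*} {r : α → α → Prop} (hr : Equivalence r) :
    Nat.card (Quot r) = Nat.card (Set.range fun a ↦ {b | r a b}) := by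
  have hker (a b : α) : r a b ↔ Setoid.ker (fun a ↦ {b | r a b}) a b := by
    refine ⟨fun hab ↦ Set.ext fun c ↦ ⟨hr.trans (hr.symm hab), hr.trans hab⟩, fun hab ↦ ?_⟩
    exact (Set.ext_iff.1 hab b).2 (hr.refl b)
  exact Nat.card_congr ((Quot.congrRight hker).trans (Setoid.quotientKerEquivRange _))

variable {R M ι Γ : Type*} [Semiring R] [AddCommMonoid M] [Module R M]

/-- The relation "some `ρ γ` maps `A i` onto `A j`" on the indices of a family of submodules.
As `Γ` is only an indexing type, this need not be an equivalence relation; its classes are those of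
the equivalence relation it generates, which `Quot` takes care of. -/
def OrbitRel (A : ι → Submodule R M) (ρ : Γ → M ≃ₗ[R] M) (i j : ι) : Prop :=
  ∃ γ, (A i).map (ρ γ : M →ₗ[R] M) = A j

lemma equivalence_orbitRel [Group Γ] (A : ι → Submodule R M) {ρ : Γ → M ≃ₗ[R] M}
    (hone : ∀ x, ρ 1 x = x) (hmul : ∀ γ₁ γ₂ x, ρ (γ₁ * γ₂) x = ρ γ₁ (ρ γ₂ x)) :
    Equivalence (OrbitRel A ρ) := by
  have hmap_one (N : Submodule R M) : N.map (ρ 1 : M →ₗ[R] M) = N := by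
    rw [show (ρ 1 : M →ₗ[R] M) = .id from LinearMap.ext hone, Submodule.map_id]
  have hmap_mul (γ δ : Γ) (N : Submodule R M) :
      N.map (ρ (γ * δ) : M →ₗ[R] M) = (N.map (ρ δ : M →ₗ[R] M)).map (ρ γ : M →ₗ[R] M) := by
    rw [← Submodule.map_comp]
    exact congrArg N.map (LinearMap.ext (hmul γ δ))
  refine ⟨fun i ↦ ⟨1, hmap_one _⟩, ?_, ?_⟩
  · rintro i j ⟨γ, hγ⟩
    exact ⟨γ⁻¹, by rw [← hγ, ← hmap_mul, inv_mul_cancel, hmap_one]⟩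
  · rintro i j k ⟨γ, hγ⟩ ⟨δ, hδ⟩
    exact ⟨δ * γ, by rw [hmap_mul, hγ, hδ]⟩

end OrbitRelation

section WeightedForm

open LinearMap (BilinForm)

variable {R M ι : Type*} [CommRing R] [AddCommGroup M] [Module R M]

lemma isCompl_iSup_ne {A : ι → Submodule R M} (hindep : iSupIndep A) (hsup : ⨆ i, A i = ⊤) (i : ι) :
    IsCompl (A i) (⨆ j ≠ i, A j) where
  disjoint := hindep i
  codisjoint := codisjoint_iff.2 <| top_le_iff.1 <| hsup ▸ iSup_le fun j ↦ by
    obtain rfl | hj := eq_or_ne j i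
    · exact le_sup_left
    · exact le_sup_of_le_right (le_iSup₂_of_le j hj le_rfl)

lemma linearMap_ext_of_iSup_eq_top {N : Type*} [AddCommGroup N] [Module R N]
    {A : ι → Submodule R M} (hsup : ⨆ i, A i = ⊤) {f g : M →ₗ[R] N}
    (h : ∀ i, ∀ x ∈ A i, f x = g x) : f = g :=
  LinearMap.eqLocus_eq_top.1 <| top_le_iff.1 <| hsup ▸ iSup_le h

variable {A : ι → Submodule R M} [Fintype ι]

/-- The form `∑ i, c i • K (Pᵢ ·) ·`, where `Pᵢ` is the projection onto the summand `A i`, as a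
linear function of the weights `c`. When the summands are `K`-orthogonal it rescales `K` by `c i`
on each `A i`. -/
noncomputable def weightedForm (K : BilinForm R M) (hA : ∀ i, IsCompl (A i) (⨆ j ≠ i, A j)) :
    (ι → R) →ₗ[R] BilinForm R M :=
  Fintype.linearCombination R fun i ↦ K ∘ₗ (A i).projection _ (hA i)

variable (K : BilinForm R M) (hA : ∀ i, IsCompl (A i) (⨆ j ≠ i, A j))

lemma weightedForm_apply_of_mem (c : ι → R) {i : ι} {x : M} (hx : x ∈ A i) :
    weightedForm K hA c x = c i • K x := by
  simp only [weightedForm, Fintype.linearCombination_apply, LinearMap.sum_apply,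
    LinearMap.smul_apply, LinearMap.comp_apply]
  rw [Finset.sum_eq_single_of_mem i (Finset.mem_univ i),
    Submodule.projection_apply_of_mem_left (hA i) hx]
  intro j _ hji
  have hxj : x ∈ ⨆ k ≠ j, A k := Submodule.mem_iSup_of_mem i (Submodule.mem_iSup_of_mem hji.symm hx)
  rw [Submodule.projection_apply_of_mem_right (hA j) hxj, map_zero, smul_zero]

lemma weightedForm_injective [NoZeroDivisors R] (hK : ∀ i, ∃ x ∈ A i, K x x ≠ 0) :
    Function.Injective (weightedForm K hA) := by
  rw [injective_iff_map_eq_zero]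
  intro c hc
  funext i
  obtain ⟨x, hx, hKx⟩ := hK i
  have hcx : c i * K x x = 0 := by
    simpa [weightedForm_apply_of_mem K hA c hx] using LinearMap.congr_fun₂ hc x x
  exact (mul_eq_zero.1 hcx).resolve_right hKx

variable {K}

lemma eq_weightedForm (hsup : ⨆ i, A i = ⊤) {B : BilinForm R M} {c : ι → R}
    (h : ∀ i, ∀ x ∈ A i, B x = c i • K x) : B = weightedForm K hA c :=
  linearMap_ext_of_iSup_eq_top hsup fun i x hx ↦ by
    rw [h i x hx, weightedForm_apply_of_mem K hA c hx]

lemma isSymm_weightedForm (hsup : ⨆ i, A i = ⊤) (hK : K.IsSymm)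
    (horth : ∀ i j, i ≠ j → ∀ x ∈ A i, ∀ y ∈ A j, K x y = 0) (c : ι → R) :
    (weightedForm K hA c).IsSymm := by
  refine LinearMap.BilinForm.isSymm_iff_flip.2 ?_
  refine linearMap_ext_of_iSup_eq_top hsup fun i x hx ↦
    linearMap_ext_of_iSup_eq_top hsup fun j y hy ↦ ?_
  rw [LinearMap.BilinForm.flip_apply, weightedForm_apply_of_mem K hA c hx,
    weightedForm_apply_of_mem K hA c hy, LinearMap.smul_apply, LinearMap.smul_apply, hK.eq]
  obtain rfl | hij := eq_or_ne i j
  · rfl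
  · rw [horth i j hij x hx y hy, smul_zero, smul_zero]

lemma weightedForm_map_apply_map (hsup : ⨆ i, A i = ⊤) {e : M ≃ₗ[R] M}
    (he : ∀ x y, K (e x) (e y) = K x y) {c : ι → R}
    (hperm : ∀ i, ∃ j, (A i).map (e : M →ₗ[R] M) = A j ∧ c i = c j) (x y : M) :
    weightedForm K hA c (e x) (e y) = weightedForm K hA c x y := by
  have h : (weightedForm K hA c).compl₁₂ (e : M →ₗ[R] M) e = weightedForm K hA c :=
    eq_weightedForm hA hsup fun i x hx ↦ by
      obtain ⟨j, hij, hc⟩ := hperm i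
      have hex : e x ∈ A j := hij ▸ Submodule.mem_map_of_mem hx
      ext y
      simp [weightedForm_apply_of_mem K hA c hex, he, hc]
  exact LinearMap.congr_fun₂ h x y

lemma weight_eq_of_map_apply_map [NoZeroDivisors R] {B : BilinForm R M}
    {e : M ≃ₗ[R] M} (heK : ∀ x y, K (e x) (e y) = K x y) (heB : ∀ x y, B (e x) (e y) = B x y)
    {N N' : Submodule R M} (hmap : N.map (e : M →ₗ[R] M) = N') (hN : ∃ x ∈ N, K x x ≠ 0)
    {a b : R} (ha : ∀ x ∈ N, B x = a • K x) (hb : ∀ x ∈ N', B x = b • K x) : a = b := by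
  obtain ⟨x, hx, hKx⟩ := hN
  have hex : e x ∈ N' := hmap ▸ Submodule.mem_map_of_mem hx
  have h : a * K x x = b * K x x :=
    calc a * K x x = B x x := by rw [ha x hx, LinearMap.smul_apply, smul_eq_mul]
      _ = B (e x) (e x) := (heB x x).symm
      _ = b * K x x := by rw [hb _ hex, LinearMap.smul_apply, smul_eq_mul, heK]
  exact mul_right_cancel₀ hKx h

end WeightedForm

section Eigenvector

open LinearMap (BilinForm)

lemma exists_ne_zero_apply_eq_smul_of_pos {V : Type*} [AddCommGroup V] [Module ℝ V]
    [FiniteDimensional ℝ V] [Nontrivial V] {K B : BilinForm ℝ V} (hK : K.IsSymm) (hB : B.IsSymm)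
    (hpos : ∀ x, x ≠ 0 → 0 < K x x) : ∃ c : ℝ, ∃ x ≠ 0, B x = c • K x := by
  let core : InnerProductSpace.Core ℝ V :=
    { inner x y := K x y
      conj_inner_symm x y := hK.eq y x
      re_inner_nonneg x := by
        obtain rfl | hx := eq_or_ne x 0
        · simp
        · exact (hpos x hx).le
      add_left := by simp
      smul_left := by simp
      definite x := not_imp_not.1 fun hx ↦ (hpos x hx).ne' }
  let _ : NormedAddCommGroup V := core.toNormedAddCommGroup
  let _ : InnerProductSpace ℝ V := .ofCore core.toCore
  have hnondeg : K.Nondegenerate :=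
    (LinearMap.BilinForm.isSymm_iff.1 hK).isRefl.nondegenerate_iff_separatingLeft.2
      fun x hx ↦ not_imp_not.1 (fun h ↦ (hpos x h).ne') (hx x)
  let T : V →ₗ[ℝ] V := B.symmCompOfNondegenerate K hnondeg
  have hT (x : V) : K (T x) = B x := B.comp_symmCompOfNondegenerate_apply hnondeg x
  have hTsymm : T.IsSymmetric := fun x y ↦ by
    change K (T x) y = K x (T y)
    rw [hT, ← hK.eq (T y), hT, hB.eq]
  obtain ⟨x, hx⟩ := hTsymm.hasEigenvalue_iSup_of_finiteDimensional.exists_hasEigenvector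
  exact ⟨_, x, hx.2, by rw [← hT, hx.apply_eq_smul, map_smul]⟩

end Eigenvector

section InvariantForm

open LinearMap (BilinForm)
open LieAlgebra.InvariantForm (orthogonal mem_orthogonal)

variable {R L : Type*} [CommRing R] [LieRing L] [LieAlgebra R L]

lemma isAtom_of_isSimple (I : LieIdeal R L) [LieAlgebra.IsSimple R I] : IsAtom I := by
  refine ⟨fun h ↦ ?_, fun J hJ ↦ ?_⟩
  · have := LieAlgebra.IsSimple.nontrivial R I
    exact (LieSubmodule.nontrivial_iff_ne_bot R L L).1 this h
  · have hmap : LieIdeal.map I.incl (J.comap I.incl) = J := by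
      rw [LieIdeal.map_comap_incl, inf_eq_right.2 hJ.le]
    obtain h | h := LieAlgebra.IsSimple.eq_bot_or_eq_top (R := R) (J.comap I.incl)
    · rw [← hmap, h, LieIdeal.map_eq_bot_iff]; exact bot_le
    · exact absurd (LieIdeal.comap_incl_eq_top.1 h) hJ.not_ge

lemma toSubmodule_ne_bot_of_isSimple (I : LieIdeal R L) [LieAlgebra.IsSimple R I] :
    I.toSubmodule ≠ ⊥ :=
  (LieSubmodule.toSubmodule_eq_bot I).not.2 (isAtom_of_isSimple I).1

lemma lieInvariant_iff_apply_lie {B : BilinForm R L} :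
    B.lieInvariant L ↔ ∀ x y z, B ⁅x, y⁆ z = B x ⁅y, z⁆ := by
  have hskew (x y z : L) : B ⁅y, x⁆ z = -B ⁅x, y⁆ z := by
    rw [← lie_skew, map_neg, LinearMap.neg_apply]
  refine ⟨fun h x y z ↦ ?_, fun h x y z ↦ ?_⟩
  · rw [hskew, h, neg_neg]
  · rw [hskew, h]

lemma lie_le_orthogonal {M : Type*} [AddCommGroup M] [Module R M] [LieRingModule L M]
    [LieModule R L M] {B : BilinForm R M} (hB : B.lieInvariant L) {I : LieIdeal R L}
    {N : LieSubmodule R L M} (hIN : ⁅I, N⁆ = ⊥) (N' : LieSubmodule R L M) :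
    ⁅I, N'⁆ ≤ orthogonal B hB N := by
  refine (LieSubmodule.lie_le_iff _ _ _).2 fun a ha b _ ↦ (mem_orthogonal _ _ _ _).2 fun y hy ↦ ?_
  have hay : ⁅a, y⁆ = 0 := (LieSubmodule.lie_eq_bot_iff _ _).1 hIN a ha y hy
  rw [← neg_eq_zero, ← hB, hay, map_zero, LinearMap.zero_apply]

lemma apply_eq_zero_of_disjoint {B : BilinForm R L} (hB : B.lieInvariant L) {I J : LieIdeal R L}
    [LieAlgebra.IsSimple R J] (hIJ : Disjoint I J) {x y : L} (hx : x ∈ I) (hy : y ∈ J) :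
    B x y = 0 := by
  have hJI : ⁅J, I⁆ = ⊥ := le_bot_iff.1 <| (LieSubmodule.lie_le_inf _ _).trans hIJ.symm.le_bot
  have hJ : ⁅J, J⁆ = J := lie_eq_self_of_isAtom_of_nonabelian J
    (isAtom_of_isSimple J) (LieAlgebra.IsSimple.non_abelian R)
  have hle : J ≤ orthogonal B hB I := hJ ▸ lie_le_orthogonal hB hJI J
  exact (mem_orthogonal _ _ _ _).1 (hle hy) x hx

lemma eq_smul_of_isIrreducible {M : Type*} [AddCommGroup M] [Module R M] [LieRingModule L M]
    [LieModule R L M] [LieModule.IsIrreducible R L M] {K B : BilinForm R M}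
    (hKinv : K.lieInvariant L) (hBinv : B.lieInvariant L) (hK : K.IsSymm) (hB : B.IsSymm)
    {c : R} {x : M} (hx0 : x ≠ 0) (hx : B x = c • K x) : B = c • K := by
  have hinv : (B - c • K).lieInvariant L := by
    rw [BilinForm.lieInvariant_iff] at hKinv hBinv ⊢
    exact sub_mem hBinv (Submodule.smul_mem _ c hKinv)
  have hxmem : x ∈ orthogonal (B - c • K) hinv ⊤ := (mem_orthogonal _ _ _ _).2 fun y _ ↦ by
    rw [(hB.sub (hK.smul c)).eq, LinearMap.sub_apply, LinearMap.smul_apply, hx, sub_self,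
      LinearMap.zero_apply]
  have htop : orthogonal (B - c • K) hinv ⊤ = ⊤ :=
    (eq_bot_or_eq_top _).resolve_left fun hbot ↦ hx0 <| by rwa [hbot, LieSubmodule.mem_bot] at hxmem
  refine sub_eq_zero.1 (LinearMap.ext₂ fun y z ↦ ?_)
  have hz : z ∈ orthogonal (B - c • K) hinv ⊤ := by rw [htop]; exact LieSubmodule.mem_top z
  exact (mem_orthogonal _ _ _ _).1 hz y (LieSubmodule.mem_top y)

lemma exists_eq_smul_of_isIrreducible {L M : Type*} [LieRing L] [LieAlgebra ℝ L] [AddCommGroup M]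
    [Module ℝ M] [FiniteDimensional ℝ M] [LieRingModule L M] [LieModule ℝ L M]
    [LieModule.IsIrreducible ℝ L M] {K B : BilinForm ℝ M} (hKinv : K.lieInvariant L)
    (hBinv : B.lieInvariant L) (hK : K.IsSymm) (hB : B.IsSymm) (hneg : ∀ x, x ≠ 0 → K x x < 0) :
    ∃ c : ℝ, B = c • K := by
  have := LieModule.nontrivial_of_isIrreducible ℝ L M
  obtain ⟨c, x, hx0, hx⟩ := exists_ne_zero_apply_eq_smul_of_pos hK.neg hB
    fun x hx ↦ neg_pos.2 (hneg x hx)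
  have hx' : B x = (-c) • K x := by rw [hx, LinearMap.neg_apply, smul_neg, ← neg_smul]
  exact ⟨-c, eq_smul_of_isIrreducible hKinv hBinv hK hB hx0 hx'⟩

lemma lieInvariant_weightedForm {ι : Type*} [Fintype ι] {g : ι → LieIdeal R L}
    (hA : ∀ i, IsCompl (g i).toSubmodule (⨆ j ≠ i, (g j).toSubmodule))
    (hsup : ⨆ i, (g i).toSubmodule = ⊤) {K : BilinForm R L} (hK : K.lieInvariant L) (c : ι → R) :
    (weightedForm K hA c).lieInvariant L := by
  rw [lieInvariant_iff_apply_lie] at hK ⊢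
  intro x y z
  induction (hsup ▸ Submodule.mem_top : x ∈ ⨆ i, (g i).toSubmodule) using Submodule.iSup_induction'
  with
  | mem i x hx =>
    have hxy : ⁅x, y⁆ ∈ (g i).toSubmodule := lie_mem_left R L (g i) x y hx
    rw [weightedForm_apply_of_mem K hA c hx, weightedForm_apply_of_mem K hA c hxy,
      LinearMap.smul_apply, LinearMap.smul_apply, hK]
  | zero => simp
  | add x x' _ _ hx hx' => simp [hx, hx']

lemma exists_apply_eq_smul_of_isSimple {L ι : Type*} [LieRing L] [LieAlgebra ℝ L]
    {g : ι → LieIdeal ℝ L} [∀ i, LieAlgebra.IsSimple ℝ (g i)]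
    (hsup : ⨆ i, (g i).toSubmodule = ⊤) (hdisj : Pairwise fun i j ↦ Disjoint (g i) (g j))
    {K B : BilinForm ℝ L} (hKinv : K.lieInvariant L) (hBinv : B.lieInvariant L) (hK : K.IsSymm)
    (hB : B.IsSymm) (i : ι) [FiniteDimensional ℝ (g i)] (hneg : ∀ x ∈ g i, x ≠ 0 → K x x < 0) :
    ∃ c : ℝ, ∀ x ∈ g i, B x = c • K x := by
  obtain ⟨c, hc⟩ := exists_eq_smul_of_isIrreducible (L := g i)
    (K := K.restrict (g i).toSubmodule) (B := B.restrict (g i).toSubmodule)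
    (fun x y z ↦ hKinv x y z) (fun x y z ↦ hBinv x y z) (hK.restrict _) (hB.restrict _)
    (fun x hx ↦ hneg x x.2 (by simpa using hx))
  refine ⟨c, fun x hx ↦ linearMap_ext_of_iSup_eq_top hsup fun j y hy ↦ ?_⟩
  obtain rfl | hij := eq_or_ne i j
  · exact LinearMap.congr_fun₂ hc ⟨x, hx⟩ ⟨y, hy⟩
  · rw [LinearMap.smul_apply, apply_eq_zero_of_disjoint hBinv (hdisj hij) hx hy,
      apply_eq_zero_of_disjoint hKinv (hdisj hij) hx hy, smul_zero]

end InvariantForm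

lemma mem_invSymmEquivForms {L Γ : Type*} [LieRing L] [LieAlgebra ℝ L] {ρ : Γ → (L ≃ₗ⁅ℝ⁆ L)}
    {B : LinearMap.BilinForm ℝ L} :
    B ∈ invSymmEquivForms L ρ ↔
      B.lieInvariant L ∧ B.IsSymm ∧ ∀ γ x y, B (ρ γ x) (ρ γ y) = B x y := by
  rw [lieInvariant_iff_apply_lie, LinearMap.BilinForm.isSymm_def]
  rfl

section SimpleIdeals

open LinearMap (BilinForm)

variable {L ι Γ : Type*} [LieRing L] [LieAlgebra ℝ L] {g : ι → LieIdeal ℝ L}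
  [∀ i, LieAlgebra.IsSimple ℝ (g i)] {ρ : Γ → (L ≃ₗ⁅ℝ⁆ L)} {K : BilinForm ℝ L}

lemma exists_mem_apply_self_ne_zero_of_neg (hneg : ∀ i, ∀ x ∈ g i, x ≠ 0 → K x x < 0) (i : ι) :
    ∃ x ∈ (g i).toSubmodule, K x x ≠ 0 := by
  obtain ⟨x, hx, hx0⟩ :=
    Submodule.exists_mem_ne_zero_of_ne_bot (toSubmodule_ne_bot_of_isSimple (g i))
  exact ⟨x, hx, (hneg i x hx hx0).ne⟩

lemma weightedForm_mem_invSymmEquivForms [Fintype ι]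
    (hA : ∀ i, IsCompl (g i).toSubmodule (⨆ j ≠ i, (g j).toSubmodule))
    (hsup : ⨆ i, (g i).toSubmodule = ⊤) (hdisj : Pairwise fun i j ↦ Disjoint (g i) (g j))
    (hperm : ∀ γ i, ∃ j, (g i).toSubmodule.map ((ρ γ).toLinearEquiv : L →ₗ[ℝ] L) =
      (g j).toSubmodule)
    (hK : K ∈ invSymmEquivForms L ρ) {c : ι → ℝ}
    (hc : ∀ i j, OrbitRel (fun i ↦ (g i).toSubmodule) (fun γ ↦ (ρ γ).toLinearEquiv) i j →
      c i = c j) :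
    weightedForm K hA c ∈ invSymmEquivForms L ρ := by
  obtain ⟨hKinv, hKsymm, hKρ⟩ := mem_invSymmEquivForms.1 hK
  have horth (i j : ι) (hij : i ≠ j) (x : L) (hx : x ∈ g i) (y : L) (hy : y ∈ g j) : K x y = 0 :=
    apply_eq_zero_of_disjoint hKinv (hdisj hij) hx hy
  refine mem_invSymmEquivForms.2 ⟨lieInvariant_weightedForm hA hsup hKinv c,
    isSymm_weightedForm hA hsup hKsymm horth c, fun γ ↦
    weightedForm_map_apply_map hA hsup (e := (ρ γ).toLinearEquiv) (hKρ γ) fun i ↦ ?_⟩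
  obtain ⟨j, hij⟩ := hperm γ i
  exact ⟨j, hij, hc i j ⟨γ, hij⟩⟩

lemma exists_weights_of_mem_invSymmEquivForms [FiniteDimensional ℝ L]
    (hsup : ⨆ i, (g i).toSubmodule = ⊤) (hdisj : Pairwise fun i j ↦ Disjoint (g i) (g j))
    (hneg : ∀ i, ∀ x ∈ g i, x ≠ 0 → K x x < 0)
    (hK : K ∈ invSymmEquivForms L ρ) {B : BilinForm ℝ L} (hB : B ∈ invSymmEquivForms L ρ) :
    ∃ c : ι → ℝ, (∀ i, ∀ x ∈ g i, B x = c i • K x) ∧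
      ∀ i j, OrbitRel (fun i ↦ (g i).toSubmodule) (fun γ ↦ (ρ γ).toLinearEquiv) i j →
        c i = c j := by
  obtain ⟨hKinv, hKsymm, hKρ⟩ := mem_invSymmEquivForms.1 hK
  obtain ⟨hBinv, hBsymm, hBρ⟩ := mem_invSymmEquivForms.1 hB
  choose c hc using fun i ↦
    exists_apply_eq_smul_of_isSimple hsup hdisj hKinv hBinv hKsymm hBsymm i (hneg i)
  refine ⟨c, hc, ?_⟩
  rintro i j ⟨γ, hγ⟩
  exact weight_eq_of_map_apply_map (e := (ρ γ).toLinearEquiv) (hKρ γ) (hBρ γ) hγ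
    (exists_mem_apply_self_ne_zero_of_neg hneg i) (hc i) (hc j)

lemma range_weightedForm_comp_funLeft [FiniteDimensional ℝ L] [Fintype ι]
    (hA : ∀ i, IsCompl (g i).toSubmodule (⨆ j ≠ i, (g j).toSubmodule))
    (hsup : ⨆ i, (g i).toSubmodule = ⊤) (hdisj : Pairwise fun i j ↦ Disjoint (g i) (g j))
    (hneg : ∀ i, ∀ x ∈ g i, x ≠ 0 → K x x < 0)
    (hperm : ∀ γ i, ∃ j, (g i).toSubmodule.map ((ρ γ).toLinearEquiv : L →ₗ[ℝ] L) =
      (g j).toSubmodule)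
    (hK : K ∈ invSymmEquivForms L ρ) :
    LinearMap.range (weightedForm K hA ∘ₗ LinearMap.funLeft ℝ ℝ
      (Quot.mk (OrbitRel (fun i ↦ (g i).toSubmodule) fun γ ↦ (ρ γ).toLinearEquiv))) =
      invSymmEquivForms L ρ := by
  ext B
  constructor
  · rintro ⟨d, rfl⟩
    exact weightedForm_mem_invSymmEquivForms hA hsup hdisj hperm hK
      fun i j hij ↦ congrArg d (Quot.sound hij)
  · intro hB
    obtain ⟨c, hc, hcr⟩ := exists_weights_of_mem_invSymmEquivForms hsup hdisj hneg hK hB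
    exact ⟨Quot.lift c hcr, (eq_weightedForm hA hsup hc).symm⟩

end SimpleIdeals

lemma killingForm_mem_invSymmEquivForms {L Γ : Type*} [LieRing L] [LieAlgebra ℝ L]
    (ρ : Γ → (L ≃ₗ⁅ℝ⁆ L)) : killingForm ℝ L ∈ invSymmEquivForms L ρ :=
  ⟨LieModule.traceForm_apply_lie_apply ℝ L L, LieModule.traceForm_comm ℝ L L,
    fun γ ↦ LieAlgebra.killingForm_of_equiv_apply (ρ γ)⟩

theorem stmt11_general {L ι Γ : Type*} [LieRing L] [LieAlgebra ℝ L] [FiniteDimensional ℝ L]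
    (g : ι → LieIdeal ℝ L) (hsimple : ∀ i, LieAlgebra.IsSimple ℝ (g i))
    (hneg : ∀ i, ∀ x ∈ g i, x ≠ 0 → killingForm ℝ L x x < 0)
    (hsup : ⨆ i, (g i).toSubmodule = ⊤) (hindep : iSupIndep fun i ↦ (g i).toSubmodule)
    (ρ : Γ → (L ≃ₗ⁅ℝ⁆ L))
    (hperm : ∀ γ i, ∃ j, (g i).toSubmodule.map ((ρ γ).toLinearEquiv : L →ₗ[ℝ] L) =
      (g j).toSubmodule) :
    Module.finrank ℝ (invSymmEquivForms L ρ) =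
      Nat.card (Quot (OrbitRel (fun i ↦ (g i).toSubmodule) fun γ ↦ (ρ γ).toLinearEquiv)) := by
  have : Finite ι :=
    WellFoundedGT.finite_of_iSupIndep hindep fun i ↦ toSubmodule_ne_bot_of_isSimple (g i)
  have := Fintype.ofFinite ι
  have := Fintype.ofFinite (Quot (OrbitRel (fun i ↦ (g i).toSubmodule) fun γ ↦ (ρ γ).toLinearEquiv))
  have hdisj : Pairwise fun i j ↦ Disjoint (g i) (g j) := fun i j hij ↦
    (LieSubmodule.disjoint_toSubmodule (N := g i) (N' := g j)).1 (hindep.pairwiseDisjoint hij)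
  have hA := isCompl_iSup_ne hindep hsup
  rw [← range_weightedForm_comp_funLeft hA hsup hdisj hneg hperm
      (killingForm_mem_invSymmEquivForms ρ),
    LinearMap.finrank_range_of_inj, Module.finrank_fintype_fun_eq_card, Nat.card_eq_fintype_card]
  exact (weightedForm_injective _ hA (exists_mem_apply_self_ne_zero_of_neg hneg)).comp
    (LinearMap.funLeft_injective_of_surjective _ _ _ Quot.mk_surjective)

/-- Let `𝔤 = 𝔤₁ ⊕ ⋯ ⊕ 𝔤ᵣ` be a direct sum of ideals, each a simple Lie
algebra with negative-definite Killing form, and let a group `Γ` act on `𝔤` by Lie algebra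
automorphisms permuting the simple ideals.  Then the space of symmetric bilinear forms on
`𝔤` that are both invariant and `Γ`-invariant has dimension equal to the number of orbits
of the induced action of `Γ` on the set of simple ideals `{𝔤₁, …, 𝔤ᵣ}`. -/
theorem stmt11 {L : Type*} [LieRing L] [LieAlgebra ℝ L] [FiniteDimensional ℝ L]
    (r : ℕ) (g : Fin r → LieIdeal ℝ L)
    (hsimple : ∀ i, LieAlgebra.IsSimple ℝ ↥(g i))
    (hneg : ∀ i, ∀ x ∈ g i, x ≠ 0 → killingForm ℝ L x x < 0)
    (hsup : (⨆ i, (LieSubmodule.toSubmodule (g i) : Submodule ℝ L)) = ⊤)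
    (hindep : iSupIndep (fun i => (LieSubmodule.toSubmodule (g i) : Submodule ℝ L)))
    {Γ : Type*} [Group Γ] (ρ : Γ → (L ≃ₗ⁅ℝ⁆ L))
    (hone : ∀ x : L, ρ 1 x = x)
    (hmul : ∀ γ₁ γ₂ : Γ, ∀ x : L, ρ (γ₁ * γ₂) x = ρ γ₁ (ρ γ₂ x))
    (hperm : ∀ γ : Γ, ∀ i : Fin r, ∃ j : Fin r,
      Submodule.map ((ρ γ).toLinearEquiv : L →ₗ[ℝ] L)
          (LieSubmodule.toSubmodule (g i) : Submodule ℝ L) =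
        (LieSubmodule.toSubmodule (g j) : Submodule ℝ L)) :
    Module.finrank ℝ ↥(invSymmEquivForms L ρ) =
      Nat.card ↥(Set.range (fun i : Fin r => {j : Fin r | ∃ γ : Γ,
        Submodule.map ((ρ γ).toLinearEquiv : L →ₗ[ℝ] L)
            (LieSubmodule.toSubmodule (g i) : Submodule ℝ L) =
          (LieSubmodule.toSubmodule (g j) : Submodule ℝ L)})) := by
  rw [stmt11_general g hsimple hneg hsup hindep ρ hperm]
  exact natCard_quot_eq_natCard_range (equivalence_orbitRel _ hone hmul)
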